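/- Let X be a separable Banach space, (Ω, F) a measurable space, and t₀ < T real numbers. Suppose ξ : Ω × [t₀, T] → X* is such that (i) for every t ∈ [t₀, T], the map ω ↦ ξ(ω, t) is F\B(T_{w*})-measurable, and (ii) for every ω ∈ Ω and every g ∈ X, the map t ↦ ⟨ξ(ω, t), g⟩ is continuous on [t₀, T]. Then the map (ω, t) ↦ ξ(ω, t) is jointly measurable, i.e., measurable from (Ω × [t₀, T], F ⊗ B([t₀, T])) to (X*, B(T_{w*})). -/

import Mathlib

open Filter Topology

/-!
By Banach–Alaoglu the weak-* dual of a separable normed space is a countable union of compact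
balls, each of which is metrizable. It is therefore hereditarily Lindelöf, although in general not
second countable, and this is enough for its Borel σ-algebra to be generated by the evaluations
`f ↦ f g`. Joint measurability can thus be tested on each scalar process `⟨ξ(ω, t), g⟩`, which is
measurable in `ω` and continuous in `t`.
-/

section HereditarilyLindelof

variable {α ι : Type*}

theorem hereditarilyLindelofSpace_of_iUnion_eq_univ [TopologicalSpace α] [Countable ι]
    {s : ι → Set α} (hs : ∀ i, HereditarilyLindelofSpace (s i)) (hs_univ : ⋃ i, s i = Set.univ) :
    HereditarilyLindelofSpace α := by
  refine .of_forall_isOpen fun u _ ↦ ?_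
  have hu : u = ⋃ i, (↑) '' ((↑) ⁻¹' u : Set (s i)) := by
    simp only [Subtype.image_preimage_coe, ← Set.iUnion_inter, hs_univ, Set.univ_inter]
  rw [hu]
  exact isLindelof_iUnion fun i ↦
    (HereditarilyLindelofSpace.isLindelof _).image continuous_subtype_val

theorem borel_eq_generateFrom_of_subbasis_of_hereditarilyLindelofSpace {s : Set (Set α)}
    [t : TopologicalSpace α] [HereditarilyLindelofSpace α] (hs : t = .generateFrom s) :
    borel α = .generateFrom s := by
  have isOpen_of_generateOpen {u : Set α} (hu : TopologicalSpace.GenerateOpen s u) : IsOpen u :=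
    hs ▸ hu
  refine le_antisymm (MeasurableSpace.generateFrom_le fun u (hu : IsOpen[t] u) ↦ ?_)
    (MeasurableSpace.generateFrom_mono fun u hu ↦ isOpen_of_generateOpen (.basic u hu))
  rw [hs] at hu
  induction hu with
  | basic u hu => exact .basic u hu
  | univ => exact .univ
  | inter u v _ _ hu hv => exact @MeasurableSet.inter α (.generateFrom s) u v hu hv
  | sUnion S hS hS_meas =>
    obtain ⟨C, hC, hCS⟩ := eq_open_union_countable (fun u : S ↦ (u : Set α))
      fun u ↦ isOpen_of_generateOpen (hS u u.2)
    rw [Set.sUnion_eq_iUnion, ← hCS]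
    exact .biUnion hC fun u _ ↦ hS_meas u u.2

theorem borel_iInf_of_hereditarilyLindelofSpace (t : ι → TopologicalSpace α)
    [@HereditarilyLindelofSpace α (⨅ i, t i)] :
    @borel α (⨅ i, t i) = ⨆ i, @borel α (t i) :=
  (@borel_eq_generateFrom_of_subbasis_of_hereditarilyLindelofSpace α _ (⨅ i, t i) _
    (generateFrom_iUnion_isOpen t).symm).trans (MeasurableSpace.iSup_generateFrom _).symm

variable {β : ι → Type*} [∀ i, TopologicalSpace (β i)] [∀ i, MeasurableSpace (β i)]
  [∀ i, BorelSpace (β i)] [TopologicalSpace α] [HereditarilyLindelofSpace α]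

theorem borel_eq_comap_pi_of_isInducing {φ : α → ∀ i, β i} (hφ : IsInducing φ) :
    borel α = MeasurableSpace.pi.comap φ := by
  have htop : ‹TopologicalSpace α› = ⨅ i, .induced (fun a ↦ φ a i) inferInstance := by
    rw [hφ.eq_induced, Pi.topologicalSpace, induced_iInf]
    simp only [induced_compose, Function.comp_def]
  have : @HereditarilyLindelofSpace α (⨅ i, .induced (fun a ↦ φ a i) inferInstance) :=
    htop ▸ ‹_›
  calc borel α = @borel α (⨅ i, .induced (fun a ↦ φ a i) inferInstance) := by rw [← htop]
    _ = ⨆ i, (borel (β i)).comap fun a ↦ φ a i := by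
      simp only [borel_iInf_of_hereditarilyLindelofSpace, borel_comap]
    _ = MeasurableSpace.pi.comap φ := by
      simp only [← BorelSpace.measurable_eq, MeasurableSpace.pi, MeasurableSpace.comap_iSup,
        MeasurableSpace.comap_comp, Function.comp_def]

theorem measurable_iff_forall_apply_of_isInducing {Ω : Type*} [MeasurableSpace Ω]
    [MeasurableSpace α] [BorelSpace α] {φ : α → ∀ i, β i} (hφ : IsInducing φ) {f : Ω → α} :
    Measurable f ↔ ∀ i, Measurable fun ω ↦ φ (f ω) i := by
  rw [← measurable_pi_iff, BorelSpace.measurable_eq (α := α), borel_eq_comap_pi_of_isInducing hφ,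
    measurable_comap_iff]
  rfl

end HereditarilyLindelof

section WeakDual

variable {𝕜 E : Type*} [NontriviallyNormedField 𝕜] [ProperSpace 𝕜]
  [SeminormedAddCommGroup E] [NormedSpace 𝕜 E] [TopologicalSpace.SeparableSpace E]

instance hereditarilyLindelofSpace_weakDual : HereditarilyLindelofSpace (WeakDual 𝕜 E) := by
  have iUnion_balls :
      ⋃ n : ℕ, WeakDual.toStrongDual ⁻¹' Metric.closedBall (0 : StrongDual 𝕜 E) n = Set.univ := by
    rw [← Set.preimage_iUnion, Metric.iUnion_closedBall_nat, Set.preimage_univ]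
  refine hereditarilyLindelofSpace_of_iUnion_eq_univ (fun n ↦ ?_) iUnion_balls
  have ball_compact := WeakDual.isCompact_closedBall (0 : StrongDual 𝕜 E) n
  have := WeakDual.metrizable_of_isCompact 𝕜 E _ ball_compact
  have := isCompact_iff_compactSpace.mp ball_compact
  infer_instance

variable [MeasurableSpace 𝕜] [BorelSpace 𝕜] [MeasurableSpace (WeakDual 𝕜 E)]
  [BorelSpace (WeakDual 𝕜 E)] {Ω : Type*} [MeasurableSpace Ω]

theorem measurable_weakDual_iff_forall_apply {f : Ω → WeakDual 𝕜 E} :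
    Measurable f ↔ ∀ g : E, Measurable fun ω ↦ f ω g := by
  have isInducing_coe : IsInducing ((⇑) : WeakDual 𝕜 E → E → 𝕜) := ⟨rfl⟩
  exact measurable_iff_forall_apply_of_isInducing isInducing_coe

theorem jointly_measurable_of_measurable_of_weakStar_continuous_general {ι : Type*}
    [TopologicalSpace ι] [TopologicalSpace.MetrizableSpace ι] [SecondCountableTopology ι]
    [MeasurableSpace ι] [OpensMeasurableSpace ι] {ξ : Ω → ι → WeakDual 𝕜 E}
    (hmeas : ∀ t, Measurable fun ω ↦ ξ ω t) (hcont : ∀ ω (g : E), Continuous fun t ↦ ξ ω t g) :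
    Measurable fun p : Ω × ι ↦ ξ p.1 p.2 := by
  refine measurable_weakDual_iff_forall_apply.mpr fun g ↦ ?_
  have measurable_pairing (t : ι) : Measurable fun ω ↦ ξ ω t g :=
    measurable_weakDual_iff_forall_apply.mp (hmeas t) g
  exact (MeasureTheory.measurable_uncurry_of_continuous_of_measurable
    (u := fun t ω ↦ ξ ω t g) (fun ω ↦ hcont ω g) measurable_pairing).comp measurable_swap

end WeakDual

/-- Let `X` be a separable Banach space, `(Ω, F)` a measurable space and `t₀ < T`.  If
`ξ : Ω × [t₀, T] → X*` is such that `ω ↦ ξ(ω, t)` is weak-* Borel measurable for each `t`, and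
`t ↦ ⟨ξ(ω, t), g⟩` is continuous for every `ω` and every `g ∈ X`, then `(ω, t) ↦ ξ(ω, t)` is
jointly measurable from `F ⊗ B([t₀, T])` to the weak-* Borel σ-algebra of `X*`. -/
theorem jointly_measurable_of_measurable_of_weakStar_continuous
    (X : Type*) [NormedAddCommGroup X] [NormedSpace ℝ X]
    [CompleteSpace X] [TopologicalSpace.SeparableSpace X]
    (Ω : Type*) [MeasurableSpace Ω]
    (t₀ T : ℝ) (hT : t₀ < T)
    (ξ : Ω → Set.Icc t₀ T → WeakDual ℝ X)
    (hmeas : ∀ t : Set.Icc t₀ T,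
      @Measurable Ω (WeakDual ℝ X) inferInstance (borel (WeakDual ℝ X))
        (fun ω => ξ ω t))
    (hcont : ∀ (ω : Ω) (g : X),
      Continuous fun t : Set.Icc t₀ T => ξ ω t g) :
    @Measurable (Ω × Set.Icc t₀ T) (WeakDual ℝ X) inferInstance (borel (WeakDual ℝ X))
      (fun p => ξ p.1 p.2) := by
  borelize (WeakDual ℝ X)
  exact jointly_measurable_of_measurable_of_weakStar_continuous_general hmeas hcont
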